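/- arXiv:1704.03545 — 3 statements merged into one kernel-verified Lean document; each statement's English description precedes it below -/
import Mathlib

section
/- Let 𝒢 be a finite group of odd order and let (ρ, V) be a finite-dimensional complex representation of 𝒢. If V is self-dual, then there exists a 𝒢-invariant nondegenerate symmetric bilinear form on V. -/
open Matrix in
theorem Matrix.trace_linearMap_eq_sum {n : Type*} [Fintype n] [DecidableEq n]
    (f : Matrix n n ℂ →ₗ[ℂ] Matrix n n ℂ) :
    LinearMap.trace ℂ _ f = ∑ i, ∑ j, f (single i j 1) i j := by
  rw [LinearMap.trace_eq_matrix_trace ℂ (Matrix.stdBasis ℂ n n), Matrix.trace,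
    Fintype.sum_prod_type]
  simp only [LinearMap.toMatrix_apply, Matrix.diag_apply, Matrix.stdBasis_eq_single]
  rfl

open Matrix in
theorem Matrix.mul_single_one_mul_apply {n : Type*} [Fintype n] [DecidableEq n]
    (P Q : Matrix n n ℂ) (i j k l : n) :
    (P * (single i j 1 : Matrix n n ℂ) * Q) k l = P k i * Q j l := by
  simp [Matrix.mul_apply, Matrix.single_apply, ite_and]

theorem LinearMap.exists_trace_eq_of_comp_self_eq_smul {V : Type*} [AddCommGroup V] [Module ℂ V]
    [FiniteDimensional ℂ V] {f : V →ₗ[ℂ] V} {c : ℂ} (hc : c ≠ 0) (h : ∀ v, f (f v) = c • f v) :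
    ∃ k : ℕ, LinearMap.trace ℂ V f = c * k ∧ (k = 0 → f = 0) := by
  have hid : IsIdempotentElem (c⁻¹ • f) := by
    ext v
    simp [h, hc]
  have hp := LinearMap.IsIdempotentElem.isProj_range _ hid
  refine ⟨Module.finrank ℂ (c⁻¹ • f).range, ?_, fun h0 => ?_⟩
  · rw [← hp.trace]
    simp [hc]
  · have := Submodule.finrank_eq_zero.mp h0
    rw [LinearMap.range_eq_bot] at this
    simpa [hc] using this

/-- The linear map `X ↦ ∑ g, P g * X * Q g` on square matrices. -/
noncomputable def sandwichSum {G n : Type*} [Fintype G] [Fintype n] (P Q : G → Matrix n n ℂ) :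
    Matrix n n ℂ →ₗ[ℂ] Matrix n n ℂ where
  toFun X := ∑ g, P g * X * Q g
  map_add' X Y := by simp [mul_add, add_mul, Finset.sum_add_distrib]
  map_smul' c X := by simp [Finset.smul_sum]

theorem sandwichSum_apply {G n : Type*} [Fintype G] [Fintype n] (P Q : G → Matrix n n ℂ)
    (X : Matrix n n ℂ) : sandwichSum P Q X = ∑ g, P g * X * Q g := rfl

theorem trace_sandwichSum {G n : Type*} [Fintype G] [Fintype n] [DecidableEq n]
    (P Q : G → Matrix n n ℂ) :
    LinearMap.trace ℂ _ (sandwichSum P Q) = ∑ g, (P g).trace * (Q g).trace := by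
  rw [Matrix.trace_linearMap_eq_sum]
  simp only [sandwichSum_apply, Matrix.sum_apply, Matrix.mul_single_one_mul_apply, Matrix.trace,
    Finset.sum_mul_sum, Matrix.diag_apply]
  rw [Finset.sum_comm' (t' := Finset.univ) (s' := fun _ => Finset.univ) (by simp)]
  rw [Finset.sum_comm]
  conv_rhs => rw [Finset.sum_comm]
  refine Finset.sum_congr rfl fun i _ => ?_
  rw [Finset.sum_comm]

open Matrix in
theorem trace_transpose_comp_sandwichSum {G n : Type*} [Fintype G] [Fintype n] [DecidableEq n]
    (P Q : G → Matrix n n ℂ) :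
    LinearMap.trace ℂ _ ((Matrix.transposeLinearEquiv n n ℂ ℂ).toLinearMap ∘ₗ sandwichSum P Q) =
      ∑ g, ((P g)ᵀ * Q g).trace := by
  rw [Matrix.trace_linearMap_eq_sum]
  have hentry (i j : n) : ((Matrix.transposeLinearEquiv n n ℂ ℂ).toLinearMap ∘ₗ sandwichSum P Q)
      (single i j 1) i j = ∑ g, P g j i * Q g j i := by
    change sandwichSum P Q (single i j 1) j i = _
    simp only [sandwichSum_apply, Matrix.sum_apply, Matrix.mul_single_one_mul_apply]
  simp only [hentry, Matrix.trace, Matrix.diag_apply, Matrix.mul_apply, Matrix.transpose_apply]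
  conv_rhs => rw [Finset.sum_comm]
  refine Finset.sum_congr rfl fun i _ => ?_
  rw [Finset.sum_comm]

theorem mul_sandwichSum_mul {G n : Type*} [Group G] [Fintype G] [Fintype n]
    {P Q : G → Matrix n n ℂ} (hP : ∀ g h, P (g * h) = P h * P g)
    (hQ : ∀ g h, Q (g * h) = Q g * Q h) (X : Matrix n n ℂ) (h : G) :
    P h * sandwichSum P Q X * Q h = sandwichSum P Q X := by
  rw [sandwichSum_apply, Finset.mul_sum, Finset.sum_mul,
    ← Equiv.sum_comp (Equiv.mulRight h) (fun g => P g * X * Q g)]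
  simp [hP, hQ, mul_assoc]

theorem sandwichSum_sandwichSum {G n : Type*} [Group G] [Fintype G] [Fintype n]
    {P Q : G → Matrix n n ℂ} (hP : ∀ g h, P (g * h) = P h * P g)
    (hQ : ∀ g h, Q (g * h) = Q g * Q h) (X : Matrix n n ℂ) :
    sandwichSum P Q (sandwichSum P Q X) = (Fintype.card G : ℂ) • sandwichSum P Q X := by
  rw [sandwichSum_apply]
  simp [mul_sandwichSum_mul hP hQ, Nat.cast_smul_eq_nsmul]

theorem sum_apply_mul_self_of_odd {G M : Type*} [Group G] [Fintype G] [AddCommMonoid M]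
    (hodd : Odd (Fintype.card G)) (f : G → M) : ∑ g, f (g * g) = ∑ g, f g := by
  have hc : (Nat.card G).Coprime 2 := by
    rw [Nat.card_eq_fintype_card]; exact hodd.coprime_two_right
  rw [← Equiv.sum_comp (powCoprime hc) f]
  simp [powCoprime, pow_two]

open Matrix in
/-- A nonzero matrix representation of a group of odd order whose character is invariant under
inversion admits a nonzero invariant symmetric form. -/
theorem exists_symm_invariant_matrix {G n : Type*} [Group G] [Fintype G] [Fintype n]
    [DecidableEq n] [Nonempty n] (hodd : Odd (Fintype.card G)) (A : G →* Matrix n n ℂ)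
    (hA : ∀ g, (A g⁻¹).trace = (A g).trace) :
    ∃ X : Matrix n n ℂ, X ≠ 0 ∧ Xᵀ = X ∧ ∀ g, (A g)ᵀ * X * A g = X := by
  by_contra! hcon
  have hcard : (Fintype.card G : ℂ) ≠ 0 := Nat.cast_ne_zero.mpr Fintype.card_ne_zero
  have hP : ∀ g h, (A (g * h))ᵀ = (A h)ᵀ * (A g)ᵀ := by simp
  have hQ : ∀ g h, A (g * h) = A g * A h := by simp
  set F := sandwichSum (fun g => (A g)ᵀ) A with hF
  have hskew (X : Matrix n n ℂ) : (F X)ᵀ = -F X := by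
    have hinv (g : G) : (A g)ᵀ * F X * A g = F X :=
      mul_sandwichSum_mul (P := fun g => (A g)ᵀ) (Q := A) hP hQ X g
    rw [eq_neg_iff_add_eq_zero, add_comm]
    by_contra hne
    obtain ⟨g, hg⟩ := hcon (F X + (F X)ᵀ) hne
      (by rw [Matrix.transpose_add, Matrix.transpose_transpose, add_comm])
    apply hg
    have := congrArg Matrix.transpose (hinv g)
    simp only [Matrix.transpose_mul, Matrix.transpose_transpose, ← mul_assoc] at this
    rw [mul_add, add_mul, hinv g, this]
  have hneg : (Matrix.transposeLinearEquiv n n ℂ ℂ).toLinearMap ∘ₗ F = -F := by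
    ext1 X
    exact hskew X
  have htr := congrArg (LinearMap.trace ℂ _) hneg
  rw [hF, trace_transpose_comp_sandwichSum, map_neg, trace_sandwichSum] at htr
  simp only [Matrix.transpose_transpose, Matrix.trace_transpose, ← map_mul] at htr
  rw [sum_apply_mul_self_of_odd hodd (fun g => (A g).trace)] at htr
  obtain ⟨k, hk, -⟩ := LinearMap.exists_trace_eq_of_comp_self_eq_smul
    (f := Matrix.toLin' (∑ g, A g)) hcard (fun v => by
      simp only [Matrix.toLin'_apply, Matrix.mulVec_mulVec, ← Matrix.smul_mulVec]
      congr 1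
      simp_rw [Finset.sum_mul, Finset.mul_sum, ← map_mul]
      rw [Finset.sum_congr rfl fun g _ => (Group.mulLeft_bijective g).sum_comp A]
      simp [Nat.cast_smul_eq_nsmul])
  rw [Matrix.trace_toLin'_eq, Matrix.trace_sum] at hk
  have hP' : ∀ g h : G, A (g * h)⁻¹ = A h⁻¹ * A g⁻¹ := by simp
  obtain ⟨l, hl, hl0⟩ := LinearMap.exists_trace_eq_of_comp_self_eq_smul hcard
    (sandwichSum_sandwichSum (P := fun g => A g⁻¹) (Q := A) hP' hQ)
  rw [trace_sandwichSum] at hl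
  simp only [hA] at hl
  rw [hk, hl, ← mul_neg, mul_right_inj' hcard, eq_neg_iff_add_eq_zero] at htr
  have hl' : l = 0 := by
    have : k + l = 0 := by exact_mod_cast htr
    omega
  have h1 := LinearMap.congr_fun (hl0 hl') 1
  simp only [sandwichSum_apply, mul_one, ← map_mul, inv_mul_cancel, map_one, Finset.sum_const,
    Finset.card_univ, LinearMap.zero_apply, ← Nat.cast_smul_eq_nsmul ℂ] at h1
  exact (smul_ne_zero hcard one_ne_zero) h1

theorem Representation.exists_symm_invariant_bilin {G V : Type*} [Group G] [Fintype G]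
    (hodd : Odd (Fintype.card G)) [AddCommGroup V] [Module ℂ V] [FiniteDimensional ℂ V]
    [Nontrivial V] (ρ : Representation ℂ G V)
    (hρ : ∀ g, LinearMap.trace ℂ V (ρ g⁻¹) = LinearMap.trace ℂ V (ρ g)) :
    ∃ B : V →ₗ[ℂ] V →ₗ[ℂ] ℂ, B ≠ 0 ∧ (∀ v w, B v w = B w v) ∧
      ∀ g v w, B (ρ g v) (ρ g w) = B v w := by
  let b := Module.finBasis ℂ V
  have : Nonempty (Fin (Module.finrank ℂ V)) := ⟨⟨0, Module.finrank_pos⟩⟩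
  let A : G →* Matrix (Fin (Module.finrank ℂ V)) (Fin (Module.finrank ℂ V)) ℂ :=
    (LinearMap.toMatrixAlgEquiv b : _ →* _).comp ρ
  have hAg (g : G) : A g = LinearMap.toMatrix b b (ρ g) := rfl
  obtain ⟨X, hX0, hXs, hXi⟩ := exists_symm_invariant_matrix hodd A
    (fun g => by simpa only [hAg, ← LinearMap.trace_eq_matrix_trace] using hρ g)
  refine ⟨Matrix.toBilin b X, by simpa using hX0, fun v w => ?_, fun g v w => ?_⟩
  · have : (Matrix.toBilin b X).IsSymm := by
      rw [LinearMap.BilinForm.isSymm_iff_basis b]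
      intro i j
      have hentry (k l) : Matrix.toBilin b X (b k) (b l) = X k l := by
        rw [← LinearMap.BilinForm.toMatrix_apply, LinearMap.BilinForm.toMatrix_toBilin]
      rw [hentry, hentry]
      exact congrFun₂ hXs j i
    exact this.eq v w
  · have : (Matrix.toBilin b X).comp (ρ g) (ρ g) = Matrix.toBilin b X := by
      apply (LinearMap.BilinForm.toMatrix b).injective
      rw [LinearMap.BilinForm.toMatrix_comp b, LinearMap.BilinForm.toMatrix_toBilin, ← hAg, hXi]
    exact congrArg (fun B => B v w) this

theorem LinearMap.trace_eq_trace_restrict_add {V : Type*} [AddCommGroup V] [Module ℂ V]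
    [FiniteDimensional ℂ V] {p q : Submodule ℂ V} (hpq : IsCompl p q) (f : V →ₗ[ℂ] V)
    (hp : ∀ x ∈ p, f x ∈ p) (hq : ∀ x ∈ q, f x ∈ q) :
    LinearMap.trace ℂ V f =
      LinearMap.trace ℂ p (f.restrict hp) + LinearMap.trace ℂ q (f.restrict hq) := by
  rw [← LinearMap.trace_prodMap', ← LinearMap.trace_conj' _ (p.prodEquivOfIsCompl q hpq)]
  congr 1
  ext v
  obtain ⟨w, rfl⟩ := (p.prodEquivOfIsCompl q hpq).surjective v
  simp [LinearEquiv.conj_apply]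

theorem Representation.trace_inv_of_dual_equiv {G V : Type*} [Group G]
    [AddCommGroup V] [Module ℂ V] [FiniteDimensional ℂ V] (ρ : Representation ℂ G V)
    (e : V ≃ₗ[ℂ] Module.Dual ℂ V) (he : ∀ g v, e (ρ g v) = ρ.dual g (e v)) (g : G) :
    LinearMap.trace ℂ V (ρ g⁻¹) = LinearMap.trace ℂ V (ρ g) := by
  rw [← LinearMap.trace_transpose', ← Representation.dual_apply, ← LinearMap.trace_conj' (ρ g) e]
  congr 1
  ext1 φ
  obtain ⟨v, rfl⟩ := e.surjective φ
  simp [LinearEquiv.conj_apply, he]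

theorem LinearMap.bijective_of_bilin_injective {V : Type*} [AddCommGroup V] [Module ℂ V]
    [FiniteDimensional ℂ V] (B : V →ₗ[ℂ] V →ₗ[ℂ] ℂ) (h : ∀ v, B v = 0 → v = 0) :
    Function.Bijective B := by
  have hi : Function.Injective B := (injective_iff_map_eq_zero B).mpr h
  exact ⟨hi, (LinearMap.injective_iff_surjective_of_finrank_eq_finrank
    Subspace.dual_finrank_eq.symm).mp hi⟩

theorem Representation.trace_inv_of_invariant_bilin {G V : Type*} [Group G]
    [AddCommGroup V] [Module ℂ V] [FiniteDimensional ℂ V] (ρ : Representation ℂ G V)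
    (B : V →ₗ[ℂ] V →ₗ[ℂ] ℂ) (hB : ∀ v, B v = 0 → v = 0)
    (hi : ∀ g v w, B (ρ g v) (ρ g w) = B v w) (g : G) :
    LinearMap.trace ℂ V (ρ g⁻¹) = LinearMap.trace ℂ V (ρ g) := by
  refine ρ.trace_inv_of_dual_equiv
    (LinearEquiv.ofBijective B (LinearMap.bijective_of_bilin_injective B hB)) (fun g v => ?_) g
  ext w
  have := hi g v (ρ g⁻¹ w)
  simpa [Representation.dual_apply, Module.Dual.transpose_apply] using this

theorem Representation.exists_nondegenerate_symm_invariant_bilin {G : Type*} [Group G] [Fintype G]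
    (hodd : Odd (Fintype.card G)) (n : ℕ) {V : Type*} [AddCommGroup V] [Module ℂ V]
    [FiniteDimensional ℂ V] (hn : Module.finrank ℂ V = n) (ρ : Representation ℂ G V)
    (hρ : ∀ g, LinearMap.trace ℂ V (ρ g⁻¹) = LinearMap.trace ℂ V (ρ g)) :
    ∃ B : V →ₗ[ℂ] V →ₗ[ℂ] ℂ, (∀ v, B v = 0 → v = 0) ∧ (∀ v w, B v w = B w v) ∧
      ∀ g v w, B (ρ g v) (ρ g w) = B v w := by
  induction n using Nat.strong_induction_on generalizing V with
  | _ n ih =>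
  rcases subsingleton_or_nontrivial V with hV | hV
  · exact ⟨0, fun v _ => Subsingleton.elim _ _, by simp, by simp⟩
  obtain ⟨S, hS0, hSs, hSi⟩ := ρ.exists_symm_invariant_bilin hodd hρ
  let R : Subrepresentation ρ := ⟨LinearMap.ker S, fun g v hv => by
    rw [LinearMap.mem_ker] at hv ⊢
    ext w
    have := hSi g v (ρ g⁻¹ w)
    simpa [hv] using this⟩
  obtain ⟨U, hU⟩ := exists_isCompl R
  have hRU : IsCompl R.toSubmodule U.toSubmodule := by
    rw [isCompl_iff, disjoint_iff, codisjoint_iff] at hU ⊢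
    exact ⟨congrArg Subrepresentation.toSubmodule hU.1, congrArg Subrepresentation.toSubmodule hU.2⟩
  have hRlt : Module.finrank ℂ R.toSubmodule < n := by
    rw [← hn]
    refine Submodule.finrank_lt fun h => hS0 (LinearMap.ker_eq_top.mp h)
  have hker {v : V} : v ∈ R.toSubmodule ↔ S v = 0 := LinearMap.mem_ker
  have hUtr := U.toRepresentation.trace_inv_of_invariant_bilin
    (S.compl₁₂ U.toSubmodule.subtype U.toSubmodule.subtype)
    (fun v hv => by
      have hvR : (v : V) ∈ R.toSubmodule := by
        rw [hker]
        ext w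
        obtain ⟨r, hr, u, hu, rfl⟩ := Submodule.mem_sup.mp
          (hRU.sup_eq_top ▸ Submodule.mem_top : w ∈ R.toSubmodule ⊔ U.toSubmodule)
        have h1 := congrArg (fun φ => φ ⟨u, hu⟩) hv
        have h2 := hSs v r
        rw [hker.mp hr] at h2
        simpa [h2] using h1
      exact Subtype.ext (Submodule.disjoint_def.mp hRU.disjoint _ hvR v.2))
    (fun g v w => hSi g v w)
  have htr (g : G) : LinearMap.trace ℂ V (ρ g) =
      LinearMap.trace ℂ _ (R.toRepresentation g) + LinearMap.trace ℂ _ (U.toRepresentation g) :=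
    LinearMap.trace_eq_trace_restrict_add hRU (ρ g) (R.apply_mem_toSubmodule g)
      (U.apply_mem_toSubmodule g)
  obtain ⟨T, hT0, hTs, hTi⟩ := ih _ hRlt rfl R.toRepresentation (fun g => by
    have := hρ g
    rwa [htr, htr, hUtr, add_left_inj] at this)
  let E := R.toSubmodule.projectionOnto U.toSubmodule hRU
  have hER (r : R.toSubmodule) : E r = r := Submodule.projectionOnto_apply_left hRU r
  have hEg (g : G) (v : V) : E (ρ g v) = R.toRepresentation g (E v) := by
    obtain ⟨r, hr, u, hu, rfl⟩ := Submodule.mem_sup.mp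
      (hRU.sup_eq_top ▸ Submodule.mem_top : v ∈ R.toSubmodule ⊔ U.toSubmodule)
    have h1 : E u = 0 := (Submodule.projectionOnto_apply_eq_zero_iff hRU).mpr hu
    have h2 : E (ρ g u) = 0 :=
      (Submodule.projectionOnto_apply_eq_zero_iff hRU).mpr (U.apply_mem_toSubmodule g hu)
    rw [map_add, map_add, map_add, h1, h2, hER ⟨r, hr⟩, add_zero, add_zero]
    exact hER (R.toRepresentation g ⟨r, hr⟩)
  refine ⟨S + T.compl₁₂ E E, fun v hv => ?_, fun v w => ?_, fun g v w => ?_⟩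
  · have hv' (w : V) : S v w + T (E v) (E w) = 0 := congrArg (fun φ => φ w) hv
    have hEv : E v = 0 := hT0 _ (by
      ext r
      have := hv' r
      rwa [hER, hSs, hker.mp r.2, LinearMap.zero_apply, zero_add] at this)
    have hvR : v ∈ R.toSubmodule := hker.mpr (by
      ext w
      simpa [hEv] using hv' w)
    simpa [hEv] using (congrArg Subtype.val (hER ⟨v, hvR⟩)).symm
  · simp [hSs v w, hTs (E v)]
  · simp [hSi, hEg, hTi]

/-- A self-dual finite-dimensional complex representation of a finite group of odd order
carries an invariant nondegenerate symmetric bilinear form. -/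
theorem stmt3 (G : Type*) [Group G] [Fintype G] (hodd : Odd (Fintype.card G))
    (V : Type*) [AddCommGroup V] [Module ℂ V] [FiniteDimensional ℂ V]
    (ρ : Representation ℂ G V)
    (hsd : ∃ e : V ≃ₗ[ℂ] Module.Dual ℂ V, ∀ (g : G) (v : V), e (ρ g v) = ρ.dual g (e v)) :
    ∃ B : V →ₗ[ℂ] V →ₗ[ℂ] ℂ,
      Function.Bijective (fun v => B v) ∧
      (∀ v w : V, B v w = B w v) ∧
      (∀ (g : G) (v w : V), B (ρ g v) (ρ g w) = B v w) := by
  obtain ⟨e, he⟩ := hsd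
  obtain ⟨B, hB, hs, hi⟩ := ρ.exists_nondegenerate_symm_invariant_bilin hodd _ rfl
    (ρ.trace_inv_of_dual_equiv e he)
  exact ⟨B, LinearMap.bijective_of_bilin_injective B hB, hs, hi⟩
end

section
/- Let 𝒢 be a finite group of odd order. Then every irreducible self-dual finite-dimensional complex representation of 𝒢 is the trivial one-dimensional representation; that is, if (ρ, V) is irreducible with V ≅ V^∨ as representations of 𝒢, then dim V = 1 and ρ(g) is the identity for every g ∈ 𝒢. -/
open Matrix in
/-- A matrix form of the Frobenius–Schur computation: if `R` preserves the invertible bilinear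
form `E` and satisfies Schur orthogonality with constant `c`, then the sum of the squares of the
`R g` is `c • (Eᵀ * E')ᵀ`. -/
theorem sum_mul_self_of_schur {G n : Type*} [Group G] [Fintype G] [Fintype n] [DecidableEq n]
    (R : G → Matrix n n ℂ) (E E' : Matrix n n ℂ) (hE : E * E' = 1)
    (hR : ∀ g, E * R g = (R g⁻¹)ᵀ * E) (c : ℂ)
    (hS : ∀ A : Matrix n n ℂ, ∑ g, R g * A * R g⁻¹ = (c * A.trace) • (1 : Matrix n n ℂ)) :
    ∑ g, R g * R g = c • (Eᵀ * E')ᵀ := by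
  have hE' : E' * E = 1 := mul_eq_one_comm.mp hE
  have hT : Eᵀ * E'ᵀ = 1 := by rw [← transpose_mul, hE', transpose_one]
  have hinv (g : G) : R g⁻¹ * E'ᵀ = E'ᵀ * (R g)ᵀ := by
    have h : R g⁻¹ = E'ᵀ * (R g)ᵀ * Eᵀ := by
      rw [Matrix.mul_assoc, ← transpose_mul, hR, ← transpose_mul, Matrix.mul_assoc, hE,
        Matrix.mul_one, transpose_transpose]
    rw [h, Matrix.mul_assoc, hT, Matrix.mul_one]
  have hX (X : Matrix n n ℂ) : ∑ g, R g * X * (R g)ᵀ = (c * (X * Eᵀ).trace) • E'ᵀ := by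
    have h := congrArg (· * E'ᵀ) (hS (X * Eᵀ))
    simp only [Finset.sum_mul, smul_mul, Matrix.one_mul] at h
    rw [← h]
    refine Finset.sum_congr rfl fun g _ => ?_
    rw [Matrix.mul_assoc _ (R g⁻¹), hinv]
    simp only [Matrix.mul_assoc]
    rw [← Matrix.mul_assoc Eᵀ, hT, Matrix.one_mul]
  have hentry (a b i j : n) : ∑ g, R g a i * R g b j = c * E i j * E' b a := by
    have h := congrFun (congrFun (hX (Matrix.single i j 1)) a) b
    simpa [Matrix.sum_apply, Matrix.mul_apply, Matrix.single_apply, Matrix.trace, ite_and,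
      Finset.sum_ite_eq] using h
  ext a j
  simp only [Matrix.sum_apply, Matrix.mul_apply, Matrix.smul_apply, Matrix.transpose_apply,
    smul_eq_mul]
  rw [Finset.sum_comm, Finset.mul_sum]
  refine Finset.sum_congr rfl fun b _ => ?_
  rw [hentry, mul_assoc]

/-- Schur's lemma for the average of the conjugates of an endomorphism. -/
theorem sum_conj_eq_smul_id {G V : Type*} [Group G] [Fintype G] [AddCommGroup V] [Module ℂ V]
    [FiniteDimensional ℂ V] [Nontrivial V] (ρ : Representation ℂ G V)
    (hirr : ∀ W : Submodule ℂ V, (∀ (g : G), ∀ v ∈ W, ρ g v ∈ W) → W = ⊥ ∨ W = ⊤)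
    (A : V →ₗ[ℂ] V) :
    ∑ g, ρ g * A * ρ g⁻¹ =
      ((Fintype.card G / Module.finrank ℂ V : ℂ) * LinearMap.trace ℂ V A) • 1 := by
  set C : Module.End ℂ V := ∑ g, ρ g * A * ρ g⁻¹ with hC
  have hcomm (h : G) : ρ h * C = C * ρ h := by
    rw [hC, Finset.mul_sum, Finset.sum_mul]
    refine Fintype.sum_equiv (Equiv.mulLeft h) _ _ fun g => ?_
    simp only [Equiv.coe_mulLeft, mul_inv_rev, map_mul, mul_assoc]
    rw [← map_mul ρ h⁻¹ h, inv_mul_cancel, map_one, mul_one]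
  obtain ⟨μ, hμ⟩ := Module.End.exists_eigenvalue C
  have htop : C.eigenspace μ = ⊤ := by
    refine (hirr _ fun g v hv => ?_).resolve_left hμ
    rw [Module.End.mem_eigenspace_iff] at hv ⊢
    have := LinearMap.congr_fun (hcomm g) v
    simp only [Module.End.mul_apply] at this
    rw [← this, hv, map_smul]
  have hCμ : C = μ • 1 := by
    ext v
    exact Module.End.mem_eigenspace_iff.mp (htop ▸ Submodule.mem_top)
  have htr : LinearMap.trace ℂ V C = Fintype.card G * LinearMap.trace ℂ V A := by
    rw [hC, map_sum, Finset.sum_congr rfl (g := fun _ => LinearMap.trace ℂ V A)]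
    · simp
    · intro g _
      rw [LinearMap.trace_mul_comm, ← mul_assoc, ← map_mul, inv_mul_cancel, map_one, one_mul]
  have hd : (Module.finrank ℂ V : ℂ) ≠ 0 := by
    exact_mod_cast Module.finrank_pos.ne'
  rw [hCμ, map_smul, LinearMap.trace_one, smul_eq_mul] at htr
  rw [hCμ, div_mul_eq_mul_div, ← htr, mul_div_cancel_right₀ _ hd]

/-- The squares of an irreducible self-dual representation do not sum to zero. -/
theorem sum_mul_self_ne_zero {G V : Type*} [Group G] [Fintype G] [AddCommGroup V] [Module ℂ V]
    [FiniteDimensional ℂ V] [Nontrivial V] (ρ : Representation ℂ G V)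
    (hirr : ∀ W : Submodule ℂ V, (∀ (g : G), ∀ v ∈ W, ρ g v ∈ W) → W = ⊥ ∨ W = ⊤)
    (e : V ≃ₗ[ℂ] Module.Dual ℂ V) (he : ∀ (g : G) (v : V), e (ρ g v) = ρ.dual g (e v)) :
    ∑ g, ρ g * ρ g ≠ 0 := by
  let b := Module.finBasis ℂ V
  have : Nonempty (Fin (Module.finrank ℂ V)) := ⟨⟨0, Module.finrank_pos⟩⟩
  let E := LinearMap.toMatrix b b.dualBasis e.toLinearMap
  let E' := LinearMap.toMatrix b.dualBasis b e.symm.toLinearMap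
  have hE : E * E' = 1 := by
    rw [← LinearMap.toMatrix_comp, LinearEquiv.comp_symm, LinearMap.toMatrix_id]
  have hR (g : G) : E * LinearMap.toMatrix b b (ρ g) =
      (LinearMap.toMatrix b b (ρ g⁻¹)).transpose * E := by
    rw [← LinearMap.toMatrix_transpose, ← LinearMap.toMatrix_comp, ← LinearMap.toMatrix_comp]
    exact congrArg _ (LinearMap.ext (he g))
  have key := sum_mul_self_of_schur (fun g => LinearMap.toMatrix b b (ρ g)) E E' hE hR
    (Fintype.card G / Module.finrank ℂ V) fun A => by
      have h := congrArg (LinearMap.toMatrix b b)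
        (sum_conj_eq_smul_id ρ hirr (Matrix.toLin b b A))
      simpa [LinearMap.toMatrix_mul, LinearMap.trace_eq_matrix_trace ℂ b] using h
  intro h0
  have h0' := congrArg (LinearMap.toMatrix b b) h0
  simp only [map_sum, LinearMap.toMatrix_mul, map_zero] at h0'
  rw [h0'] at key
  have hc : (Fintype.card G / Module.finrank ℂ V : ℂ) ≠ 0 :=
    div_ne_zero (by exact_mod_cast Fintype.card_ne_zero)
      (by exact_mod_cast Module.finrank_pos.ne')
  have hz := (smul_eq_zero.mp key.symm).resolve_left hc
  have hEu : IsUnit E.det := (Matrix.isUnit_iff_isUnit_det _).mp (IsUnit.of_mul_eq_one _ hE)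
  have hEu' : IsUnit E'.det := (Matrix.isUnit_iff_isUnit_det _).mp
    (IsUnit.of_mul_eq_one _ (mul_eq_one_comm.mp hE))
  have hdet := congrArg Matrix.det hz
  rw [Matrix.det_transpose, Matrix.det_mul, Matrix.det_transpose, Matrix.det_zero] at hdet
  exact mul_ne_zero hEu.ne_zero hEu'.ne_zero hdet

/-- Every irreducible self-dual finite-dimensional complex representation of a finite group
of odd order is the trivial one-dimensional representation. -/
theorem stmt5 (G : Type*) [Group G] [Fintype G] (hodd : Odd (Fintype.card G))
    (V : Type*) [AddCommGroup V] [Module ℂ V] [FiniteDimensional ℂ V]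
    (ρ : Representation ℂ G V) (hnz : Nontrivial V)
    (hirr : ∀ W : Submodule ℂ V, (∀ (g : G), ∀ v ∈ W, ρ g v ∈ W) → W = ⊥ ∨ W = ⊤)
    (hsd : ∃ e : V ≃ₗ[ℂ] Module.Dual ℂ V, ∀ (g : G) (v : V), e (ρ g v) = ρ.dual g (e v)) :
    Module.finrank ℂ V = 1 ∧ ∀ g : G, ρ g = LinearMap.id := by
  obtain ⟨e, he⟩ := hsd
  have hsum : ∑ g, ρ g ≠ 0 := by
    have h := sum_mul_self_ne_zero ρ hirr e he
    have hcop : (Nat.card G).Coprime 2 := by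
      rw [Nat.card_eq_fintype_card]
      exact Nat.coprime_two_right.mpr hodd
    rwa [Fintype.sum_equiv (powCoprime hcop) (fun g => ρ g * ρ g) (fun g => ρ g)
      fun g => by simp [pow_two]] at h
  obtain ⟨v, hv⟩ : ∃ v, (∑ g, ρ g) v ≠ 0 := by
    by_contra! h
    exact hsum (LinearMap.ext h)
  set w := (∑ g, ρ g) v with hw
  have hinv (g : G) : ρ g w = w := by
    have h : ρ g * ∑ x, ρ x = ∑ x, ρ x := by
      rw [Finset.mul_sum]
      exact Fintype.sum_equiv (Equiv.mulLeft g) _ _ fun x => by simp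
    exact LinearMap.congr_fun h v
  have hspan : Submodule.span ℂ {w} = ⊤ := by
    refine (hirr _ fun g u hu => ?_).resolve_left (by simpa using hv)
    obtain ⟨a, rfl⟩ := Submodule.mem_span_singleton.mp hu
    rw [map_smul, hinv]
    exact hu
  refine ⟨?_, fun g => ?_⟩
  · rw [← finrank_top, ← hspan, finrank_span_singleton hv]
  · ext u
    obtain ⟨a, rfl⟩ := Submodule.mem_span_singleton.mp (hspan ▸ Submodule.mem_top : u ∈ _)
    simp [hinv]
end

section
/- Let k be a finite field of odd cardinality q, let m ≥ 1, and let M be a module over the matrix ring M_m(k) which, viewed as a k-vector space via the scalar matrices, is finite-dimensional with dim_k M = d·m (every such module is isomorphic to a direct sum of d copies of the natural module k^m). For g ∈ GL_m(k), left multiplication by g is a permutation of the finite set M, and its sign is +1 if and only if ((det g)^((q−1)/2))^d = 1 in k. Consequently, the sign of this permutation equals +1 for every g ∈ GL_m(k) if and only if d is even. -/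
open Matrix

section UnitSign

variable {k : Type*} [Field k] [Fintype k] [DecidableEq k]

/-- The sign of multiplication by a unit of a finite field, as a character. -/
def unitSign (k : Type*) [Field k] [Fintype k] [DecidableEq k] : kˣ →* ℤˣ :=
  Equiv.Perm.sign.comp (MulAction.toPermHom kˣ k)

lemma unitSign_apply (u : kˣ) :
    unitSign k u = Equiv.Perm.sign (MulAction.toPerm u : Equiv.Perm k) := rfl

lemma unitSign_eq_neg_one_of_forall_mem_zpowers (hq : Odd (Fintype.card k)) {u : kˣ}
    (hu : ∀ v : kˣ, v ∈ Subgroup.zpowers u) : unitSign k u = -1 := by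
  have hcard : 2 < Fintype.card k := by
    have := Fintype.one_lt_card (α := k)
    obtain ⟨r, hr⟩ := hq
    omega
  have hu1 : u ≠ 1 := by
    rintro rfl
    have h1 : Fintype.card kˣ ≤ 1 := Fintype.card_le_one_iff.2 fun a b => by
      have ha := hu a
      have hb := hu b
      simp only [Subgroup.zpowers_one_eq_bot, Subgroup.mem_bot] at ha hb
      rw [ha, hb]
    rw [Fintype.card_units] at h1
    omega
  have hfix (y : k) : (MulAction.toPerm u : Equiv.Perm k) y ≠ y ↔ y ≠ 0 := by
    rw [MulAction.toPerm_apply, Units.smul_def, smul_eq_mul, not_iff_not]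
    constructor
    · intro h
      by_contra hy
      exact hu1 (Units.ext (mul_right_cancel₀ hy (by simpa using h)))
    · rintro rfl
      simp
  have hcycle : (MulAction.toPerm u : Equiv.Perm k).IsCycle := by
    refine ⟨1, (hfix 1).2 one_ne_zero, fun y hy => ?_⟩
    obtain ⟨n, hn⟩ := hu (Units.mk0 y ((hfix y).1 hy))
    refine ⟨n, ?_⟩
    have : (MulAction.toPerm u : Equiv.Perm k) ^ n = MulAction.toPerm (u ^ n) :=
      (map_zpow (MulAction.toPermHom kˣ k) u n).symm
    simp only at hn
    rw [this, hn, MulAction.toPerm_apply, Units.smul_def, smul_eq_mul, mul_one, Units.val_mk0]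
  have hsupp : (MulAction.toPerm u : Equiv.Perm k).support = Finset.univ.erase 0 := by
    ext y
    simp only [Equiv.Perm.mem_support, hfix, Finset.mem_erase, Finset.mem_univ, and_true]
  rw [unitSign_apply, hcycle.sign, hsupp, Finset.card_erase_of_mem (Finset.mem_univ _),
    Finset.card_univ, (Nat.Odd.sub_odd hq odd_one).neg_one_pow]

lemma unitSign_eq_one_iff (hq : Odd (Fintype.card k)) (u : kˣ) :
    unitSign k u = 1 ↔ u ^ ((Fintype.card k - 1) / 2) = 1 := by
  obtain ⟨z, hz⟩ := IsCyclic.exists_generator (α := kˣ)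
  have hdiv : (Fintype.card k - 1) / 2 = Fintype.card k / 2 := by
    obtain ⟨r, hr⟩ := hq
    omega
  have hchar : ringChar k ≠ 2 := fun h => by
    have := FiniteField.even_card_of_char_two h
    obtain ⟨r, hr⟩ := hq
    omega
  rw [hdiv, ← FiniteField.unit_isSquare_iff hchar]
  constructor
  · obtain ⟨n, rfl⟩ := hz u
    intro h
    simp only [map_zpow, unitSign_eq_neg_one_of_forall_mem_zpowers hq hz] at h
    have hn : Even n := by
      by_contra hn
      rw [Int.not_even_iff_odd] at hn
      rw [hn.neg_one_zpow] at h
      exact absurd h (by decide)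
    exact hn.isSquare_zpow z
  · rintro ⟨v, rfl⟩
    rw [map_mul, Int.units_mul_self]

lemma sign_scale_coordinate (hq : Odd (Fintype.card k)) {ι : Type*} [Fintype ι] [DecidableEq ι]
    (i : ι) (u : kˣ) :
    Equiv.Perm.sign (MulAction.toPerm (Pi.mulSingle i u : ι → kˣ) : Equiv.Perm (ι → k)) =
      unitSign k u := by
  have h := Equiv.Perm.sign_eq_sign_of_equiv
    (MulAction.toPerm (Pi.mulSingle i u : ι → kˣ) : Equiv.Perm (ι → k))
    (Equiv.prodCongrLeft fun _ : {j // j ≠ i} → k => (MulAction.toPerm u : Equiv.Perm k))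
    (Equiv.funSplitAt i k) (fun x => by
      ext j
      · simp [Equiv.funSplitAt, Equiv.piSplitAt]
      · simp [Equiv.funSplitAt, Equiv.piSplitAt, Pi.mulSingle_eq_of_ne j.2])
  rw [h, Equiv.Perm.sign_prodCongrLeft, Finset.prod_const, Finset.card_univ, Fintype.card_fun,
    ← unitSign_apply]
  rcases Int.units_eq_one_or (unitSign k u) with h | h <;> rw [h]
  · simp
  · exact hq.pow.neg_one_pow

lemma sign_scale (hq : Odd (Fintype.card k)) {ι : Type*} [Fintype ι] [DecidableEq ι]
    (u : ι → kˣ) :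
    Equiv.Perm.sign (MulAction.toPerm u : Equiv.Perm (ι → k)) = ∏ i, unitSign k (u i) := by
  have h := map_prod (Equiv.Perm.sign.comp (MulAction.toPermHom (ι → kˣ) (ι → k)))
    (fun i => Pi.mulSingle i (u i)) Finset.univ
  rw [Finset.univ_prod_mulSingle] at h
  exact h.trans (Finset.prod_congr rfl fun i _ => sign_scale_coordinate hq i (u i))

end UnitSign

lemma sign_toPerm_of_transvection {k : Type*} [Field k] [Fintype k]
    (hq : Odd (Fintype.card k)) {n : Type*} [Fintype n] [DecidableEq n]
    {M : Type*} [AddCommGroup M] [Module (Matrix n n k) M] [Fintype M] [DecidableEq M]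
    (g : GL n k) (t : TransvectionStruct n k)
    (hg : (g : Matrix n n k) = t.toMatrix) :
    Equiv.Perm.sign (MulAction.toPerm g : Equiv.Perm M) = 1 := by
  have hpow (r : ℕ) : t.toMatrix ^ r = transvection t.i t.j (r * t.c) := by
    induction r with
    | zero => simp
    | succ r ih =>
      rw [pow_succ, ih, TransvectionStruct.toMatrix, transvection_mul_transvection_same _ _ t.hij]
      congr 1
      push_cast
      ring
  have h1 : g ^ Fintype.card k = 1 := by
    ext1
    rw [Units.val_pow_eq_pow_val, hg, hpow]
    simp
  have h2 := map_pow (Equiv.Perm.sign.comp (MulAction.toPermHom (GL n k) M)) g (Fintype.card k)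
  rw [h1, map_one] at h2
  change 1 = Equiv.Perm.sign (MulAction.toPerm g : Equiv.Perm M) ^ _ at h2
  rcases Int.units_eq_one_or (Equiv.Perm.sign (MulAction.toPerm g : Equiv.Perm M)) with h | h
  · exact h
  · rw [h, hq.neg_one_pow] at h2
    exact absurd h2 (by decide)

section MatrixModule

variable {k : Type*} [Field k] {n : Type*} [Fintype n] [DecidableEq n]
  {M : Type*} [AddCommGroup M] [Module (Matrix n n k) M] [Module k M]
  [IsScalarTower k (Matrix n n k) M]

variable (k M) in
/-- A module over a matrix ring is a power of the range of any diagonal matrix unit. -/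
noncomputable def matrixModuleEquiv (i₀ : n) :
    M ≃ₗ[k] (n → LinearMap.range (Algebra.lsmul k k M (single i₀ i₀ (1 : k)))) where
  toFun x i := ⟨single i₀ i (1 : k) • x, single i₀ i (1 : k) • x, by
    simp [← mul_smul]⟩
  map_add' x y := by ext; simp
  map_smul' c x := by ext; simp [smul_comm _ c]
  invFun y := ∑ i, single i i₀ (1 : k) • (y i : M)
  left_inv x := by
    simp only [← mul_smul, single_mul_single_same, mul_one, ← Finset.sum_smul]
    rw [sum_single_one, one_smul]
  right_inv y := by
    ext i
    obtain ⟨z, hz⟩ := (y i).2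
    simp only [Finset.smul_sum, ← mul_smul]
    rw [Finset.sum_eq_single i]
    · simp only [single_mul_single_same, mul_one, ← hz]
      simp [← mul_smul]
    · intro j _ hj
      simp [single_mul_single_of_ne _ _ _ _ hj.symm]
    · simp

lemma exists_equiv_diagonal_smul [Finite M] (i₀ : n) {d : ℕ}
    (hdim : Module.finrank k M = d * Fintype.card n) :
    ∃ φ : M ≃ (n × Fin d → k), ∀ (a : n → k) (x : M) (p : n × Fin d),
      φ (diagonal a • x) p = a p.1 * φ x p := by
  set V := LinearMap.range (Algebra.lsmul k k M (single i₀ i₀ (1 : k)))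
  have hV : Module.finrank k V = d := by
    have h := (matrixModuleEquiv k M i₀).finrank_eq
    rw [hdim, Module.finrank_pi_fintype, Finset.sum_const, Finset.card_univ, smul_eq_mul,
      mul_comm] at h
    exact (Nat.eq_of_mul_eq_mul_left (Fintype.card_pos_iff.2 ⟨i₀⟩) h).symm
  let b := Module.finBasisOfFinrankEq k V hV
  refine ⟨(matrixModuleEquiv k M i₀).toEquiv.trans
    ((Equiv.piCongrRight fun _ => b.equivFun.toEquiv).trans (Equiv.curry _ _ _).symm),
    fun a x p => ?_⟩
  have h : matrixModuleEquiv k M i₀ (diagonal a • x) p.1 =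
      a p.1 • matrixModuleEquiv k M i₀ x p.1 := by
    ext
    change single i₀ p.1 (1 : k) • diagonal a • x = a p.1 • single i₀ p.1 (1 : k) • x
    rw [← mul_smul, ← smul_assoc]
    congr 1
    ext r s
    by_cases hs : p.1 = s <;> simp [mul_diagonal, single_apply, hs, mul_comm]
  change b.equivFun (matrixModuleEquiv k M i₀ (diagonal a • x) p.1) p.2 =
    a p.1 * b.equivFun (matrixModuleEquiv k M i₀ x p.1) p.2
  rw [h, map_smul, Pi.smul_apply, smul_eq_mul]

lemma sign_toPerm_of_diagonal [Fintype k] [DecidableEq k] (hq : Odd (Fintype.card k))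
    [Fintype M] [DecidableEq M] (i₀ : n) {d : ℕ}
    (hdim : Module.finrank k M = d * Fintype.card n) (g : GL n k) (u : n → kˣ)
    (hg : (g : Matrix n n k) = diagonal fun i => (u i : k)) :
    Equiv.Perm.sign (MulAction.toPerm g : Equiv.Perm M) = ∏ i, unitSign k (u i) ^ d := by
  obtain ⟨φ, hφ⟩ := exists_equiv_diagonal_smul (M := M) i₀ hdim
  rw [Equiv.Perm.sign_eq_sign_of_equiv (MulAction.toPerm g : Equiv.Perm M)
    (MulAction.toPerm (fun p : n × Fin d => u p.1) : Equiv.Perm (n × Fin d → k)) φ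
    (fun x => by
      ext p
      rw [MulAction.toPerm_apply, Units.smul_def, hg, hφ]
      rfl), sign_scale hq, Fintype.prod_prod_type]
  simp

theorem sign_toPerm_eq_unitSign_det_pow [Fintype k] [DecidableEq k] (hq : Odd (Fintype.card k))
    [Fintype M] [DecidableEq M] [Nonempty n] {d : ℕ}
    (hdim : Module.finrank k M = d * Fintype.card n) (g : GL n k) :
    Equiv.Perm.sign (MulAction.toPerm g : Equiv.Perm M) =
      unitSign k (GeneralLinearGroup.det g) ^ d := by
  obtain ⟨i₀⟩ := ‹Nonempty n›
  suffices h : ∀ g' : GL n k, (g' : Matrix n n k) = g →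
      Equiv.Perm.sign (MulAction.toPerm g' : Equiv.Perm M) =
        unitSign k (GeneralLinearGroup.det g') ^ d from h g rfl
  refine diagonal_transvection_induction_of_det_ne_zero (fun A => ∀ g : GL n k,
      (g : Matrix n n k) = A → Equiv.Perm.sign (MulAction.toPerm g : Equiv.Perm M) =
        unitSign k (GeneralLinearGroup.det g) ^ d) (g : Matrix n n k)
    (GeneralLinearGroup.det g).ne_zero ?_ ?_ ?_
  · intro D hD g hg
    rw [det_diagonal, Finset.prod_ne_zero_iff] at hD
    let u : n → kˣ := fun i => Units.mk0 (D i) (hD i (Finset.mem_univ i))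
    have hdet : GeneralLinearGroup.det g = ∏ i, u i := by
      ext
      rw [GeneralLinearGroup.val_det_apply, hg, det_diagonal, Units.coe_prod]
      rfl
    rw [sign_toPerm_of_diagonal hq i₀ hdim g u hg, hdet, map_prod, Finset.prod_pow]
  · intro t g hg
    have hdet : GeneralLinearGroup.det g = 1 := by
      ext
      rw [GeneralLinearGroup.val_det_apply, hg, t.det, Units.val_one]
    rw [sign_toPerm_of_transvection hq g t hg, hdet, map_one, one_pow]
  · intro A B hA hB ihA ihB g hg
    have h : g = GeneralLinearGroup.mkOfDetNeZero A hA * GeneralLinearGroup.mkOfDetNeZero B hB :=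
      Units.ext hg
    have h2 := map_mul (Equiv.Perm.sign.comp (MulAction.toPermHom (GL n k) M))
      (GeneralLinearGroup.mkOfDetNeZero A hA) (GeneralLinearGroup.mkOfDetNeZero B hB)
    rw [← h] at h2
    refine h2.trans ?_
    rw [h, map_mul, map_mul, mul_pow, ← ihA _ rfl, ← ihB _ rfl]
    rfl

end MatrixModule

/-- Let `k` be a finite field of odd cardinality `q` and `M` a module over `M_m(k)`,
viewed as a `k`-vector space via scalar matrices, of `k`-dimension `d·m`. For
`g ∈ GL_m(k)`, left multiplication by `g` is a permutation of `M` whose sign is `+1`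
iff `((det g)^((q−1)/2))^d = 1`; consequently the sign is `+1` for every `g` iff
`d` is even. -/
theorem stmt15 (k : Type*) [Field k] [Fintype k] (hq : Odd (Fintype.card k))
    (m : ℕ) (hm : 1 ≤ m)
    (M : Type*) [AddCommGroup M] [Module (Matrix (Fin m) (Fin m) k) M]
    [Module k M] [IsScalarTower k (Matrix (Fin m) (Fin m) k) M]
    [Fintype M] [DecidableEq M]
    (d : ℕ) (hdim : Module.finrank k M = d * m) :
    (∀ g : GL (Fin m) k,
      (Equiv.Perm.sign (MulAction.toPerm g : Equiv.Perm M) = 1 ↔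
        ((g : Matrix (Fin m) (Fin m) k).det ^ ((Fintype.card k - 1) / 2)) ^ d = 1)) ∧
    ((∀ g : GL (Fin m) k,
        Equiv.Perm.sign (MulAction.toPerm g : Equiv.Perm M) = 1) ↔ Even d) := by
  classical
  have : Nonempty (Fin m) := ⟨⟨0, hm⟩⟩
  have key := sign_toPerm_eq_unitSign_det_pow (k := k) (n := Fin m) (M := M) hq (d := d)
    (by rw [hdim, Fintype.card_fin])
  refine ⟨fun g => ?_, fun h => ?_, fun hd g => ?_⟩
  · rw [key, ← map_pow, unitSign_eq_one_iff hq, ← GeneralLinearGroup.val_det_apply,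
      ← Units.val_pow_eq_pow_val, ← Units.val_pow_eq_pow_val, Units.val_eq_one, pow_right_comm]
  · obtain ⟨z, hz⟩ := IsCyclic.exists_generator (α := kˣ)
    let D : Fin m → k := fun i => ((Pi.mulSingle ⟨0, hm⟩ z : Fin m → kˣ) i : k)
    have hD : (diagonal D).det = z := by
      rw [det_diagonal, ← Units.coe_prod, Finset.prod_pi_mulSingle']
      simp
    let g := GeneralLinearGroup.mkOfDetNeZero (diagonal D) (hD ▸ z.ne_zero)
    have hg : GeneralLinearGroup.det g = z := Units.ext hD
    have h1 := h g
    rw [key, hg, unitSign_eq_neg_one_of_forall_mem_zpowers hq hz] at h1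
    by_contra hd
    rw [(Nat.not_even_iff_odd.1 hd).neg_one_pow] at h1
    exact absurd h1 (by decide)
  · obtain ⟨r, rfl⟩ := hd
    rw [key, pow_add, Int.units_mul_self]
end
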